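/- arXiv:1401.3026 — 2 statements merged into one kernel-verified Lean document; each statement's English description precedes it below -/
import Mathlib

section
/- Let n ≥ 1, let M₁, …, M_N ∈ ℝ^{n×n}, let p₁, …, p_N be positive reals summing to 1, and let μ = p₁ δ_{M₁} + ⋯ + p_N δ_{M_N}. Let A be a random matrix with law μ and let M = {M₁, …, M_N}. Then ρ̂(M) = limsup_{p→∞} ρ(E[A^{⊗p}])^{1/p}, where the limit superior is over positive integers p. -/
open MeasureTheory Filter Topology
open scoped ENNReal RealInnerProductSpace

noncomputable section

/-- The space of real `n × n` matrices. -/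
abbrev Mat (n : ℕ) := Matrix (Fin n) (Fin n) ℝ

/-- Euclidean space `ℝⁿ`. -/
abbrev EucSp (n : ℕ) := EuclideanSpace ℝ (Fin n)

/-- The (Borel = product) measurable structure on `n × n` real matrices. -/
instance matMeasurableSpace (n : ℕ) : MeasurableSpace (Mat n) :=
  inferInstanceAs (MeasurableSpace (Fin n → Fin n → ℝ))

/-- Lebesgue measure on the space of `n × n` real matrices `≅ ℝ^{n²}`. -/
def matLebesgue (n : ℕ) : Measure (Mat n) :=
  (inferInstance : MeasureSpace (Fin n → Fin n → ℝ)).volume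

/-- The operator norm (maximal singular value) of a real square matrix, induced by the
Euclidean norm. -/
def opNorm {m : ℕ} (A : Matrix (Fin m) (Fin m) ℝ) : ℝ :=
  ‖LinearMap.toContinuousLinearMap (Matrix.toEuclideanLin A)‖

/-- The product `A_k ⋯ A_1` of the matrices `f 0 = A_1, …, f (k-1) = A_k` (decreasing order of
indices). -/
def prodRev {m k : ℕ} (f : Fin k → Matrix (Fin m) (Fin m) ℝ) : Matrix (Fin m) (Fin m) ℝ :=
  ((List.ofFn f).reverse).prod

/-- The joint spectral radius of a set of matrices:
`ρ̂(M) = limsup_{k→∞} sup_{A₁,…,A_k ∈ M} ‖A_k ⋯ A₁‖^(1/k)`. -/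
def jsr {m : ℕ} (M : Set (Matrix (Fin m) (Fin m) ℝ)) : ℝ :=
  limsup (fun k : ℕ =>
    sSup {x : ℝ | ∃ f : Fin k → Matrix (Fin m) (Fin m) ℝ,
      (∀ i, f i ∈ M) ∧ x = opNorm (prodRev f)} ^ ((1 : ℝ) / k)) atTop

/-- `E[‖A_k ⋯ A₁‖^p]` where `A₁, …, A_k` are i.i.d. with law `μ`. -/
def kExpNorm {m : ℕ} (μ : Measure (Mat m)) (p k : ℕ) : ℝ :=
  ∫ f : Fin k → Mat m, opNorm (prodRev f) ^ p ∂(Measure.pi fun _ => μ)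

/-- The `L^p`-norm joint spectral radius (`p`-radius) of a probability distribution `μ`:
`ρ_{p,μ} = lim_{k→∞} (E[‖A_k ⋯ A₁‖^p])^{1/(pk)}`; since this limit exists for distributions
with bounded support, it coincides with the `limsup` used here. -/
def pRadius {m : ℕ} (μ : Measure (Mat m)) (p : ℕ) : ℝ :=
  limsup (fun k : ℕ => kExpNorm μ p k ^ (1 / (p * k : ℝ))) atTop

/-- The (topological) support of a measure on matrices. -/
def msupport {m : ℕ} (μ : Measure (Mat m)) : Set (Mat m) :=
  {A | ∀ ε : ℝ, 0 < ε → μ {B | opNorm (B - A) < ε} ≠ 0}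

/-- `μ` has bounded support. -/
def HasBoundedSupport {m : ℕ} (μ : Measure (Mat m)) : Prop :=
  ∃ C : ℝ, ∀ A ∈ msupport μ, opNorm A ≤ C

/-- A proper cone of `ℝⁿ`: a closed convex pointed cone with nonempty interior. -/
structure IsProperCone {m : ℕ} (K : Set (EucSp m)) : Prop where
  isClosed : IsClosed K
  convex : Convex ℝ K
  smul_mem : ∀ c : ℝ, 0 ≤ c → ∀ x ∈ K, c • x ∈ K
  pointed : ∀ x ∈ K, -x ∈ K → x = 0
  solid : (interior K).Nonempty

/-- A matrix `A` leaves a cone `K` invariant: `A K ⊆ K`. -/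
def LeavesInv {m : ℕ} (A : Matrix (Fin m) (Fin m) ℝ) (K : Set (EucSp m)) : Prop :=
  ∀ x ∈ K, Matrix.toEuclideanLin A x ∈ K

/-- A set of matrices leaves a cone invariant if each of its members does. -/
def SetLeavesInv {m : ℕ} (S : Set (Matrix (Fin m) (Fin m) ℝ)) (K : Set (EucSp m)) : Prop :=
  ∀ A ∈ S, LeavesInv A K

/-- `π(K)`: the set of matrices leaving the cone `K` invariant. -/
def piCone {m : ℕ} (K : Set (EucSp m)) : Set (Mat m) := {A | LeavesInv A K}

/-- Distance (valued in `ℝ≥0∞`, with `d(A, ∅) = ∞`) from a matrix to a set of matrices, in the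
operator norm. -/
def edistSet {m : ℕ} (A : Mat m) (S : Set (Mat m)) : ℝ≥0∞ :=
  ⨅ B ∈ S, ENNReal.ofReal (opNorm (A - B))

/-- Hausdorff distance between two sets of matrices (operator norm, valued in `ℝ≥0∞`). -/
def hausdorffDistE {m : ℕ} (S T : Set (Mat m)) : ℝ≥0∞ :=
  max (⨆ A ∈ S, edistSet A T) (⨆ B ∈ T, edistSet B S)

/-- `S_M = {A : A − M leaves K invariant}`, i.e. `{A : A ≥^K M}`. -/
def matSSet {m : ℕ} (K : Set (EucSp m)) (M : Mat m) : Set (Mat m) :=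
  {A | LeavesInv (A - M) K}

/-- `π_r = {M ∈ π(K) : d(M, ∂π(K)) ≥ r}`. -/
def piConeR {m : ℕ} (K : Set (EucSp m)) (r : ℝ) : Set (Mat m) :=
  {M | M ∈ piCone K ∧ ENNReal.ofReal r ≤ edistSet M (frontier (piCone K))}

/-- `M_r = (π_r ∩ supp μ_c) ∪ supp μ_s`. -/
def MrSet {m : ℕ} (K : Set (EucSp m)) (μc μs : Measure (Mat m)) (r : ℝ) : Set (Mat m) :=
  (piConeR K r ∩ msupport μc) ∪ msupport μs

/-- The measure `ν` is zero or a finite linear combination (with positive coefficients) of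
Dirac measures. -/
def IsFiniteDiracComb {m : ℕ} (ν : Measure (Mat m)) : Prop :=
  ν = 0 ∨ ∃ (N : ℕ) (w : Fin N → ℝ) (Ms : Fin N → Mat m),
    (∀ i, 0 < w i) ∧ ν = ∑ i, ENNReal.ofReal (w i) • Measure.dirac (Ms i)

/-- The `p`-th Kronecker power of a square matrix (with `A^{⊗0} = 1`, `A^{⊗(p+1)} = A^{⊗p} ⊗ A`). -/
def kronPow {m : ℕ} (A : Matrix (Fin m) (Fin m) ℝ) :
    (p : ℕ) → Matrix (Fin (m ^ p)) (Fin (m ^ p)) ℝ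
  | 0 => 1
  | p + 1 =>
    Matrix.reindex (finProdFinEquiv.trans (finCongr (pow_succ m p).symm))
      (finProdFinEquiv.trans (finCongr (pow_succ m p).symm))
      (Matrix.kroneckerMap (· * ·) (kronPow A p) A)

/-- The `q`-th Kronecker power of a vector. -/
def vecKronPow {m : ℕ} (x : EucSp m) : (q : ℕ) → EucSp (m ^ q)
  | 0 => WithLp.toLp 2 fun _ => 1
  | q + 1 => WithLp.toLp 2 fun i =>
      vecKronPow x q (finProdFinEquiv.symm (finCongr (pow_succ m q) i)).1 *
        x (finProdFinEquiv.symm (finCongr (pow_succ m q) i)).2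

/-- The spectral radius of a real square matrix: the largest modulus of a complex eigenvalue. -/
def specRad {m : ℕ} (A : Matrix (Fin m) (Fin m) ℝ) : ℝ :=
  sSup ((norm : ℂ → ℝ) '' spectrum ℂ (A.map Complex.ofReal))

/-- The entrywise expectation `E[A^{⊗p}]` of the `p`-th Kronecker power under `μ`. -/
def kronExp {m : ℕ} (μ : Measure (Mat m)) (p : ℕ) :
    Matrix (Fin (m ^ p)) (Fin (m ^ p)) ℝ :=
  Matrix.of fun i j => ∫ A, kronPow A p i j ∂μ

/-- `V` is a stochastic Lyapunov function for `μ` of degree `p` with growth rate `γ`. -/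
def IsStochLyap {m : ℕ} (μ : Measure (Mat m)) (p : ℕ) (γ : ℝ) (V : EucSp m → ℝ) : Prop :=
  (∃ C₁ : ℝ, 0 < C₁ ∧ ∃ C₂ : ℝ, 0 < C₂ ∧
    ∀ x : EucSp m, C₁ * ‖x‖ ^ p ≤ V x ∧ V x ≤ C₂ * ‖x‖ ^ p) ∧
  ∀ x : EucSp m, (∫ A, V (Matrix.toEuclideanLin A x) ∂μ) ≤ γ ^ p * V x

/-- `ν` is a norm on `ℝ^m`. -/
def IsNormFn {m : ℕ} (ν : EucSp m → ℝ) : Prop :=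
  (∀ x, 0 ≤ ν x) ∧ (∀ x, ν x = 0 ↔ x = 0) ∧
  (∀ (a : ℝ) (x : EucSp m), ν (a • x) = |a| * ν x) ∧
  (∀ x y : EucSp m, ν (x + y) ≤ ν x + ν y)

/-- `ν` is cone absolute with respect to `K`:
`ν x = inf {ν (v + w) : v, w ∈ K, x = v − w}`. -/
def IsConeAbsolute {m : ℕ} (K : Set (EucSp m)) (ν : EucSp m → ℝ) : Prop :=
  ∀ x : EucSp m, ν x = sInf {r : ℝ | ∃ v ∈ K, ∃ w ∈ K, x = v - w ∧ r = ν (v + w)}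

/-- The dual cone `K* = {f : fᵀx ≥ 0 for all x ∈ K}`. -/
def dualConeSet {m : ℕ} (K : Set (EucSp m)) : Set (EucSp m) :=
  {f | ∀ x ∈ K, 0 ≤ ⟪f, x⟫}

/-- `ν` is cone linear with respect to `K`: `ν = ⟪f, ·⟫` on `K` for some `f ∈ K*`. -/
def IsConeLinear {m : ℕ} (K : Set (EucSp m)) (ν : EucSp m → ℝ) : Prop :=
  ∃ f ∈ dualConeSet K, ∀ x ∈ K, ν x = ⟪f, x⟫

/-- The matrix norm induced by a norm `ν` on `ℝ^m`. -/
def inducedNormFn {m : ℕ} (ν : EucSp m → ℝ) (A : Matrix (Fin m) (Fin m) ℝ) : ℝ :=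
  sSup {c : ℝ | ∃ x : EucSp m, x ≠ 0 ∧ c = ν (Matrix.toEuclideanLin A x) / ν x}

/-! Expanding the `k`-th power of `E[A^{⊗p}] = ∑ᵢ wᵢ Mᵢ^{⊗p}` over words of length `k` gives
`∑ w(f) P_f^{⊗p}`, where `P_f` is the product along the word `f` and `w(f)` is the product of its
weights. Each entry of `P_f^{⊗p}` is a product of `p` entries of `P_f`, hence at most `‖P_f‖^p` in
absolute value. Conversely, some entries of `P_f^{⊗p}` are `p`-th powers of entries of `P_f`; for
even `p` they are nonnegative, so in the sum over words they cannot cancel, and one word whose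
product has large norm already makes the sum large. With Gelfand's formula this yields
`c r^p ≤ ρ(E[A^{⊗p}])` for `0 ≤ r < ρ̂` and even `p`, and `ρ(E[A^{⊗p}]) ≤ C r^p` for `r > ρ̂`, where
`c = minᵢ wᵢ` and `C = ∑ᵢ wᵢ` do not depend on `p`, so that they disappear in the `p`-th root. -/

section RootGrowth

variable {u : ℕ → ℝ} {a c C r : ℝ}

theorem tendsto_mul_pow_rpow_one_div (hc : 0 < c) (hr : 0 ≤ r) :
    Tendsto (fun k : ℕ => (c * r ^ k) ^ ((1 : ℝ) / k)) atTop (𝓝 r) := by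
  have hroot : Tendsto (fun k : ℕ => c ^ ((1 : ℝ) / k) * r) atTop (𝓝 r) := by
    simpa using ((tendsto_const_nhds (x := c)).rpow
      (tendsto_one_div_atTop_nhds_zero_nat (𝕜 := ℝ)) (Or.inl hc.ne')).mul_const r
  refine hroot.congr' ?_
  filter_upwards [eventually_ne_atTop 0] with k hk
  rw [Real.mul_rpow hc.le (by positivity), one_div, Real.pow_rpow_inv_natCast hr hk]

theorem isCoboundedUnder_le_rpow_one_div (hu : ∀ k, 0 ≤ u k) :
    IsCoboundedUnder (· ≤ ·) atTop (fun k : ℕ => u k ^ ((1 : ℝ) / k)) :=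
  (isBoundedUnder_of_eventually_ge (a := 0) <|
    .of_forall fun k => Real.rpow_nonneg (hu k) _).isCoboundedUnder_le

theorem eventually_rpow_one_div_le (hu : ∀ k, 0 ≤ u k) (h : ∀ᶠ k in atTop, u k ≤ c * r ^ k) :
    ∀ᶠ k : ℕ in atTop, u k ^ ((1 : ℝ) / k) ≤ (c * r ^ k) ^ ((1 : ℝ) / k) :=
  h.mono fun k hk => Real.rpow_le_rpow (hu k) hk (by positivity)

theorem isBoundedUnder_le_rpow_one_div (hu : ∀ k, 0 ≤ u k) (hc : 0 < c) (hr : 0 ≤ r)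
    (h : ∀ᶠ k in atTop, u k ≤ c * r ^ k) :
    IsBoundedUnder (· ≤ ·) atTop (fun k : ℕ => u k ^ ((1 : ℝ) / k)) :=
  (tendsto_mul_pow_rpow_one_div hc hr).isBoundedUnder_le.mono_le (eventually_rpow_one_div_le hu h)

theorem limsup_rpow_one_div_le (hu : ∀ k, 0 ≤ u k) (hc : 0 < c) (hr : 0 ≤ r)
    (h : ∀ᶠ k in atTop, u k ≤ c * r ^ k) :
    limsup (fun k : ℕ => u k ^ ((1 : ℝ) / k)) atTop ≤ r := by
  have hlim := tendsto_mul_pow_rpow_one_div hc hr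
  exact (limsup_le_limsup (eventually_rpow_one_div_le hu h) (isCoboundedUnder_le_rpow_one_div hu)
    hlim.isBoundedUnder_le).trans_eq hlim.limsup_eq

theorem le_limsup_rpow_one_div
    (hbdd : IsBoundedUnder (· ≤ ·) atTop (fun k : ℕ => u k ^ ((1 : ℝ) / k)))
    (hc : 0 < c) (hr : 0 ≤ r) (h : ∃ᶠ k in atTop, c * r ^ k ≤ u k) :
    r ≤ limsup (fun k : ℕ => u k ^ ((1 : ℝ) / k)) atTop := by
  refine le_of_forall_lt_imp_le_of_dense fun y hy => le_limsup_of_frequently_le ?_ hbdd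
  have hev := (tendsto_mul_pow_rpow_one_div hc hr).eventually_const_le hy
  refine (h.and_eventually hev).mono fun k ⟨hk, hyk⟩ => hyk.trans ?_
  exact Real.rpow_le_rpow (by positivity) hk (by positivity)

theorem limsup_rpow_one_div_nonneg (hu : ∀ k, 0 ≤ u k)
    (hbdd : IsBoundedUnder (· ≤ ·) atTop (fun k : ℕ => u k ^ ((1 : ℝ) / k))) :
    0 ≤ limsup (fun k : ℕ => u k ^ ((1 : ℝ) / k)) atTop :=
  le_limsup_of_frequently_le (.of_forall fun k => Real.rpow_nonneg (hu k) _) hbdd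

theorem limsup_rpow_one_div_eq (hu : ∀ k, 0 ≤ u k) (ha : 0 ≤ a) (hc : 0 < c) (hC : 0 < C)
    (hle : ∀ r, a < r → ∀ᶠ k in atTop, u k ≤ C * r ^ k)
    (hge : ∀ r, 0 ≤ r → r < a → ∃ᶠ k in atTop, c * r ^ k ≤ u k) :
    limsup (fun k : ℕ => u k ^ ((1 : ℝ) / k)) atTop = a := by
  have hbdd := isBoundedUnder_le_rpow_one_div hu hC (by positivity) (hle _ (lt_add_one a))
  refine le_antisymm
    (le_of_forall_gt_imp_ge_of_dense fun r hr =>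
      limsup_rpow_one_div_le hu hC (ha.trans hr.le) (hle r hr))
    (le_of_forall_lt_imp_le_of_dense fun r hr => ?_)
  rcases lt_or_ge r 0 with hr0 | hr0
  · exact hr0.le.trans (limsup_rpow_one_div_nonneg hu hbdd)
  · exact le_limsup_rpow_one_div hbdd hc hr0 (hge r hr0 hr)

theorem eventually_lt_pow_of_limsup_rpow_lt (hu : ∀ k, 0 ≤ u k) (hr : 0 ≤ r)
    (hbdd : IsBoundedUnder (· ≤ ·) atTop (fun k : ℕ => u k ^ ((1 : ℝ) / k)))
    (h : limsup (fun k : ℕ => u k ^ ((1 : ℝ) / k)) atTop < r) :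
    ∀ᶠ k in atTop, u k < r ^ k := by
  filter_upwards [eventually_lt_of_limsup_lt h hbdd, eventually_ne_atTop 0] with k hk hk0
  rwa [one_div, Real.rpow_inv_lt_iff_of_pos (hu k) hr (by positivity), Real.rpow_natCast] at hk

theorem frequently_pow_lt_of_lt_limsup_rpow (hu : ∀ k, 0 ≤ u k) (hr : 0 ≤ r)
    (h : r < limsup (fun k : ℕ => u k ^ ((1 : ℝ) / k)) atTop) :
    ∃ᶠ k in atTop, r ^ k < u k := by
  refine ((frequently_lt_of_lt_limsup (isCoboundedUnder_le_rpow_one_div hu) h).and_eventually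
    (eventually_ne_atTop 0)).mono fun k ⟨hk, hk0⟩ => ?_
  rwa [one_div, Real.lt_rpow_inv_iff_of_pos hr (hu k) (by positivity), Real.rpow_natCast] at hk

end RootGrowth

section EntryBounds

open scoped Matrix.Norms.L2Operator

variable {𝕜 m n : Type*} [RCLike 𝕜] [Fintype m] [Fintype n] [DecidableEq n]

theorem norm_entry_le_l2_opNorm (A : Matrix m n 𝕜) (i : m) (j : n) : ‖A i j‖ ≤ ‖A‖ := by
  have hcol := A.l2_opNorm_mulVec (EuclideanSpace.single j (1 : 𝕜))
  have hentry := (PiLp.norm_apply_le _ i).trans hcol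
  simpa using hentry

theorem l2_opNorm_single_le [DecidableEq m] (i : m) (j : n) (a : 𝕜) :
    ‖Matrix.single i j a‖ ≤ ‖a‖ := by
  rw [Matrix.l2_opNorm_def]
  refine ContinuousLinearMap.opNorm_le_bound _ (norm_nonneg a) fun x => ?_
  have happly : Matrix.toEuclideanLin (Matrix.single i j a) x
      = EuclideanSpace.single i (a * x j) := by
    ext l
    simp [Matrix.toLpLin_apply, Matrix.single_mulVec, Function.update_apply]
  calc ‖Matrix.toEuclideanLin (Matrix.single i j a) x‖ = ‖a‖ * ‖x j‖ := by
        rw [happly, PiLp.norm_single, norm_mul]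
    _ ≤ ‖a‖ * ‖x‖ := mul_le_mul_of_nonneg_left (PiLp.norm_apply_le x j) (norm_nonneg a)

theorem l2_opNorm_le_sum_norm_entry (A : Matrix m n 𝕜) : ‖A‖ ≤ ∑ i, ∑ j, ‖A i j‖ := by
  classical
  conv_lhs => rw [Matrix.matrix_eq_sum_single A]
  refine (norm_sum_le _ _).trans (Finset.sum_le_sum fun i _ => ?_)
  exact (norm_sum_le _ _).trans (Finset.sum_le_sum fun j _ => l2_opNorm_single_le i j _)

theorem l2_opNorm_le_of_norm_entry_le (A : Matrix m n 𝕜) {t : ℝ}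
    (h : ∀ i j, ‖A i j‖ ≤ t) : ‖A‖ ≤ Fintype.card m * Fintype.card n * t :=
  calc ‖A‖ ≤ ∑ i, ∑ j, ‖A i j‖ := l2_opNorm_le_sum_norm_entry A
    _ ≤ ∑ _i : m, ∑ _j : n, t := by gcongr; exact h _ _
    _ = Fintype.card m * Fintype.card n * t := by simp [mul_assoc]

end EntryBounds

section SpecRad

open scoped Matrix.Norms.L2Operator

variable {m : ℕ} (A : Mat m)

theorem specRad_nonneg : 0 ≤ specRad A :=
  Real.sSup_nonneg (by rintro _ ⟨z, -, rfl⟩; exact norm_nonneg z)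

variable [NeZero m]

theorem ofReal_specRad : ENNReal.ofReal (specRad A) = spectralRadius ℂ (A.map Complex.ofReal) := by
  obtain ⟨z, hz, hz_max⟩ := spectrum.exists_nnnorm_eq_spectralRadius (A.map Complex.ofReal)
  have hspec : specRad A = ‖z‖ := by
    refine IsGreatest.csSup_eq ⟨⟨z, hz, rfl⟩, ?_⟩
    rintro _ ⟨y, hy, rfl⟩
    have hyz : (‖y‖₊ : ℝ≥0∞) ≤ ‖z‖₊ := by
      rw [hz_max]
      exact le_iSup₂ (α := ℝ≥0∞) (f := fun k _ => (‖k‖₊ : ℝ≥0∞)) y hy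
    exact_mod_cast hyz
  rw [hspec, ← hz_max]
  exact ofReal_norm z

theorem tendsto_norm_map_ofReal_pow_specRad :
    Tendsto (fun k : ℕ => ‖(A ^ k).map Complex.ofReal‖ ^ ((1 : ℝ) / k)) atTop
      (𝓝 (specRad A)) := by
  have hgelfand := spectrum.pow_norm_pow_one_div_tendsto_nhds_spectralRadius (A.map Complex.ofReal)
  rw [← ofReal_specRad] at hgelfand
  have hreal := (ENNReal.tendsto_toReal ENNReal.ofReal_ne_top).comp hgelfand
  rw [ENNReal.toReal_ofReal (specRad_nonneg A)] at hreal
  refine hreal.congr fun k => ?_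
  have hpow : (A.map Complex.ofReal) ^ k = (A ^ k).map Complex.ofReal :=
    (map_pow Complex.ofRealHom.mapMatrix A k).symm
  rw [Function.comp_apply, ENNReal.toReal_ofReal (by positivity), hpow]

theorem specRad_le_of_eventually_abs_pow_entry_le {r : ℝ} (hr : 0 ≤ r)
    (h : ∀ᶠ k : ℕ in atTop, ∀ i j, |(A ^ k) i j| ≤ r ^ k) : specRad A ≤ r := by
  have hm : (0 : ℝ) < m := by exact_mod_cast NeZero.pos m
  rw [← (tendsto_norm_map_ofReal_pow_specRad A).limsup_eq]
  refine limsup_rpow_one_div_le (fun _ => norm_nonneg _) (mul_pos hm hm) hr ?_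
  filter_upwards [h] with k hk
  simpa using l2_opNorm_le_of_norm_entry_le ((A ^ k).map Complex.ofReal)
    (fun i j => by simpa using hk i j)

theorem le_specRad_of_frequently_le_abs_pow_entry {c r : ℝ} (hc : 0 < c) (hr : 0 ≤ r)
    (h : ∃ᶠ k : ℕ in atTop, ∃ i j, c * r ^ k ≤ |(A ^ k) i j|) : r ≤ specRad A := by
  have hlim := tendsto_norm_map_ofReal_pow_specRad A
  rw [← hlim.limsup_eq]
  refine le_limsup_rpow_one_div hlim.isBoundedUnder_le hc hr (h.mono ?_)
  rintro k ⟨i, j, hij⟩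
  have hentry := norm_entry_le_l2_opNorm ((A ^ k).map Complex.ofReal) i j
  rw [Matrix.map_apply, Complex.norm_real] at hentry
  exact hij.trans hentry

end SpecRad

section ProdRev

variable {m k : ℕ}

theorem prodRev_succ (f : Fin (k + 1) → Mat m) : prodRev f = prodRev (Fin.tail f) * f 0 := by
  simp [prodRev, List.ofFn_succ, Fin.tail_def]

theorem prodRev_cons (A : Mat m) (f : Fin k → Mat m) :
    prodRev (Fin.cons A f : Fin (k + 1) → Mat m) = prodRev f * A := by
  simp [prodRev_succ]

theorem prodRev_smul (c : Fin k → ℝ) (f : Fin k → Mat m) :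
    prodRev (fun i => c i • f i) = (∏ i, c i) • prodRev f := by
  induction k with
  | zero => simp [prodRev]
  | succ k ih =>
    rw [prodRev_succ, prodRev_succ, Fin.prod_univ_succ, mul_smul]
    have htail : prodRev (Fin.tail fun i => c i • f i)
        = (∏ i : Fin k, c i.succ) • prodRev (Fin.tail f) :=
      ih (Fin.tail c) (Fin.tail f)
    rw [htail, Matrix.smul_mul, Matrix.mul_smul, smul_comm]

theorem sum_pow_eq_sum_prodRev {ι : Type*} [Fintype ι] (B : ι → Mat m) (k : ℕ) :
    (∑ i, B i) ^ k = ∑ f : Fin k → ι, prodRev (B ∘ f) := by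
  induction k with
  | zero => simp [prodRev]
  | succ k ih =>
    rw [← (Fin.consEquiv fun _ => ι).sum_comp, Fintype.sum_prod_type, Finset.sum_comm, pow_succ,
      ih, Finset.sum_mul_sum]
    simp [Fin.consEquiv, Fin.comp_cons, prodRev_cons]

theorem opNorm_nonneg (A : Mat m) : 0 ≤ opNorm A := norm_nonneg _

theorem abs_entry_le_opNorm (A : Mat m) (i j : Fin m) : |A i j| ≤ opNorm A :=
  norm_entry_le_l2_opNorm A i j

theorem exists_opNorm_le_mul_abs_entry [NeZero m] (A : Mat m) :
    ∃ i j, opNorm A ≤ m * m * |A i j| := by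
  obtain ⟨⟨i, j⟩, hmax⟩ := Finite.exists_max fun q : Fin m × Fin m => |A q.1 q.2|
  have hnorm := l2_opNorm_le_of_norm_entry_le A fun a b => hmax (a, b)
  rw [Fintype.card_fin] at hnorm
  exact ⟨i, j, hnorm⟩

theorem opNorm_prodRev_le_prod (f : Fin k → Mat m) : opNorm (prodRev f) ≤ ∏ i, opNorm (f i) := by
  induction k with
  | zero =>
    refine ContinuousLinearMap.opNorm_le_bound _ (by simp) fun x => ?_
    simp [prodRev]
  | succ k ih =>
    rw [prodRev_succ, Fin.prod_univ_succ, mul_comm]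
    refine (Matrix.l2_opNorm_mul (prodRev (Fin.tail f)) (f 0)).trans ?_
    exact mul_le_mul_of_nonneg_right (ih (Fin.tail f)) (opNorm_nonneg _)

end ProdRev

section JointSpectralRadius

variable {m : ℕ} {M : Set (Mat m)} {r : ℝ}

/-- The norms of the products of `k` matrices from `M`, whose supremum enters the definition of the
joint spectral radius. -/
def prodNorms (M : Set (Mat m)) (k : ℕ) : Set ℝ :=
  {x | ∃ f : Fin k → Mat m, (∀ i, f i ∈ M) ∧ x = opNorm (prodRev f)}

theorem bddAbove_opNorm_image_range {ι : Type*} [Finite ι] (Ms : ι → Mat m) :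
    BddAbove (opNorm '' Set.range Ms) :=
  ((Set.finite_range Ms).image opNorm).bddAbove

theorem sSup_prodNorms_nonneg (M : Set (Mat m)) (k : ℕ) : 0 ≤ sSup (prodNorms M k) :=
  Real.sSup_nonneg (by rintro _ ⟨f, -, rfl⟩; exact opNorm_nonneg _)

theorem exists_forall_mem_prodNorms_le_pow (hM : BddAbove (opNorm '' M)) :
    ∃ C : ℝ, 0 < C ∧ ∀ k, ∀ x ∈ prodNorms M k, x ≤ C ^ k := by
  obtain ⟨C, hC, hle⟩ := hM.exists_ge 1
  refine ⟨C, one_pos.trans_le hC, ?_⟩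
  rintro k _ ⟨f, hf, rfl⟩
  refine (opNorm_prodRev_le_prod f).trans ?_
  simpa using Finset.prod_le_prod (fun i _ => opNorm_nonneg (f i)) fun i (_ : i ∈ Finset.univ) =>
    hle _ ⟨f i, hf i, rfl⟩

theorem bddAbove_prodNorms (hM : BddAbove (opNorm '' M)) (k : ℕ) : BddAbove (prodNorms M k) := by
  obtain ⟨C, -, hC⟩ := exists_forall_mem_prodNorms_le_pow hM
  exact ⟨C ^ k, hC k⟩

theorem isBoundedUnder_le_sSup_prodNorms (hM : BddAbove (opNorm '' M)) :
    IsBoundedUnder (· ≤ ·) atTop (fun k : ℕ => sSup (prodNorms M k) ^ ((1 : ℝ) / k)) := by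
  obtain ⟨C, hC0, hC⟩ := exists_forall_mem_prodNorms_le_pow hM
  refine isBoundedUnder_le_rpow_one_div (sSup_prodNorms_nonneg M) one_pos hC0.le (.of_forall ?_)
  intro k
  simpa using Real.sSup_le (hC k) (by positivity)

theorem jsr_nonneg (hM : BddAbove (opNorm '' M)) : 0 ≤ jsr M :=
  limsup_rpow_one_div_nonneg (sSup_prodNorms_nonneg M) (isBoundedUnder_le_sSup_prodNorms hM)

theorem eventually_opNorm_prodRev_le_pow (hM : BddAbove (opNorm '' M)) (hr : jsr M < r) :
    ∀ᶠ k : ℕ in atTop, ∀ f : Fin k → Mat m, (∀ i, f i ∈ M) → opNorm (prodRev f) ≤ r ^ k := by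
  filter_upwards [eventually_lt_pow_of_limsup_rpow_lt (sSup_prodNorms_nonneg M)
    ((jsr_nonneg hM).trans hr.le) (isBoundedUnder_le_sSup_prodNorms hM) hr] with k hk f hf
  exact (le_csSup (bddAbove_prodNorms hM k) ⟨f, hf, rfl⟩).trans hk.le

theorem frequently_exists_pow_le_opNorm_prodRev (hr0 : 0 ≤ r) (hr : r < jsr M) :
    ∃ᶠ k : ℕ in atTop, ∃ f : Fin k → Mat m, (∀ i, f i ∈ M) ∧ r ^ k ≤ opNorm (prodRev f) := by
  refine (frequently_pow_lt_of_lt_limsup_rpow (sSup_prodNorms_nonneg M) hr0 hr).mono fun k hk => ?_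
  have hne : (prodNorms M k).Nonempty := by
    by_contra! hempty
    rw [hempty, Real.sSup_empty] at hk
    exact hk.not_ge (by positivity)
  obtain ⟨_, ⟨f, hf, rfl⟩, hlt⟩ := exists_lt_of_lt_csSup hne hk
  exact ⟨f, hf, hlt.le⟩

end JointSpectralRadius

section KroneckerPower

variable {m : ℕ}

theorem kronPow_one (p : ℕ) : kronPow (1 : Mat m) p = 1 := by
  induction p with
  | zero => rfl
  | succ p ih =>
    rw [kronPow, ih, Matrix.kroneckerMap_one_one _ (by simp) (by simp) (by simp),
      Matrix.reindex_apply, Matrix.submatrix_one_equiv]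

theorem kronPow_mul (A B : Mat m) (p : ℕ) :
    kronPow (A * B) p = kronPow A p * kronPow B p := by
  induction p with
  | zero => exact (one_mul _).symm
  | succ p ih =>
    simp only [kronPow, ih, Matrix.reindex_apply]
    rw [Matrix.submatrix_mul_equiv]
    exact congrArg (Matrix.submatrix · _ _) (Matrix.mul_kronecker_mul _ _ _ _)

theorem kronPow_prodRev {k : ℕ} (f : Fin k → Mat m) (p : ℕ) :
    kronPow (prodRev f) p = prodRev fun i => kronPow (f i) p := by
  induction k with
  | zero => simp [prodRev, kronPow_one]
  | succ k ih =>
    rw [prodRev_succ, kronPow_mul, ih, prodRev_succ]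
    rfl

theorem sum_smul_kronPow_pow {ι : Type*} [Fintype ι] (Ms : ι → Mat m) (w : ι → ℝ) (p k : ℕ) :
    (∑ i, w i • kronPow (Ms i) p) ^ k
      = ∑ f : Fin k → ι, (∏ i, w (f i)) • kronPow (prodRev (Ms ∘ f)) p := by
  rw [sum_pow_eq_sum_prodRev]
  refine Finset.sum_congr rfl fun f _ => ?_
  rw [kronPow_prodRev]
  exact prodRev_smul (fun i => w (f i)) fun i => kronPow (Ms (f i)) p

theorem abs_kronPow_le_opNorm_pow (A : Mat m) (p : ℕ) (i j : Fin (m ^ p)) :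
    |kronPow A p i j| ≤ opNorm A ^ p := by
  induction p with
  | zero =>
    rw [kronPow, Matrix.one_apply]
    split_ifs <;> simp
  | succ p ih =>
    simp only [kronPow, Matrix.reindex_apply, Matrix.submatrix_apply, Matrix.kroneckerMap_apply,
      abs_mul, pow_succ]
    exact mul_le_mul (ih _ _) (abs_entry_le_opNorm A _ _) (abs_nonneg _)
      (pow_nonneg (opNorm_nonneg A) p)

/-- The multi-index `(i, …, i)` in the flattened index set `Fin (m ^ p)` of `p`-th Kronecker
powers. It singles out the entries of `A^{⊗p}` that are `p`-th powers of entries of `A`. -/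
def diagIndex (i : Fin m) : (p : ℕ) → Fin (m ^ p)
  | 0 => ⟨0, by simp⟩
  | p + 1 => finProdFinEquiv.trans (finCongr (pow_succ m p).symm) (diagIndex i p, i)

theorem kronPow_diagIndex (A : Mat m) (p : ℕ) (i j : Fin m) :
    kronPow A p (diagIndex i p) (diagIndex j p) = A i j ^ p := by
  induction p with
  | zero => simp [kronPow, diagIndex, Matrix.one_apply]
  | succ p ih =>
    simp only [kronPow, diagIndex, Matrix.reindex_apply, Matrix.submatrix_apply,
      Matrix.kroneckerMap_apply, Equiv.symm_apply_apply, ih, pow_succ]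

theorem kronExp_sum_smul_dirac {ι : Type*} [Fintype ι] (Ms : ι → Mat m) {w : ι → ℝ}
    (hw : ∀ i, 0 ≤ w i) (p : ℕ) :
    kronExp (∑ i, ENNReal.ofReal (w i) • Measure.dirac (Ms i)) p
      = ∑ i, w i • kronPow (Ms i) p := by
  have : MeasurableSingletonClass (Mat m) :=
    inferInstanceAs (MeasurableSingletonClass (Fin m → Fin m → ℝ))
  ext a b
  rw [kronExp, Matrix.of_apply, integral_finsetSum_measure fun i _ =>
    (integrable_dirac (by simp)).smul_measure ENNReal.ofReal_ne_top]
  simp [Matrix.sum_apply, integral_smul_measure, integral_dirac, ENNReal.toReal_ofReal (hw _)]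

end KroneckerPower

section MeanKroneckerPower

variable {ι : Type*} [Fintype ι] {n : ℕ} (Ms : ι → Mat n) {w : ι → ℝ}

theorem abs_sum_smul_kronPow_pow_le (hw : ∀ i, 0 ≤ w i) (p k : ℕ) {t : ℝ}
    (ht : ∀ f : Fin k → ι, opNorm (prodRev (Ms ∘ f)) ≤ t) (i j : Fin (n ^ p)) :
    |((∑ i, w i • kronPow (Ms i) p) ^ k) i j| ≤ (∑ i, w i) ^ k * t ^ p := by
  rw [sum_smul_kronPow_pow, Matrix.sum_apply, Finset.sum_pow', Finset.sum_mul]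
  refine (Finset.abs_sum_le_sum_abs _ _).trans (Finset.sum_le_sum fun f _ => ?_)
  have hf : 0 ≤ ∏ i, w (f i) := Finset.prod_nonneg fun _ _ => hw _
  rw [Matrix.smul_apply, smul_eq_mul, abs_mul, abs_of_nonneg hf]
  exact mul_le_mul_of_nonneg_left ((abs_kronPow_le_opNorm_pow _ p i j).trans
    (pow_le_pow_left₀ (opNorm_nonneg _) (ht f) p)) hf

theorem mul_pow_le_sum_smul_kronPow_pow_diagIndex (hw : ∀ i, 0 ≤ w i) {p k : ℕ} (hp : Even p)
    (f : Fin k → ι) (i j : Fin n) :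
    (∏ l, w (f l)) * prodRev (Ms ∘ f) i j ^ p
      ≤ ((∑ i, w i • kronPow (Ms i) p) ^ k) (diagIndex i p) (diagIndex j p) := by
  rw [sum_smul_kronPow_pow, Matrix.sum_apply]
  simp only [Matrix.smul_apply, kronPow_diagIndex, smul_eq_mul]
  exact Finset.single_le_sum
    (f := fun g : Fin k → ι => (∏ l, w (g l)) * prodRev (Ms ∘ g) i j ^ p)
    (fun g _ => mul_nonneg (Finset.prod_nonneg fun _ _ => hw _) (hp.pow_nonneg _))
    (Finset.mem_univ f)

variable [NeZero n] {r : ℝ}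

theorem specRad_sum_smul_kronPow_le (hw : ∀ i, 0 ≤ w i) (p : ℕ) (hr : jsr (Set.range Ms) < r) :
    specRad (∑ i, w i • kronPow (Ms i) p) ≤ (∑ i, w i) * r ^ p := by
  have hM := bddAbove_opNorm_image_range Ms
  have hr0 : 0 ≤ r := (jsr_nonneg hM).trans hr.le
  have hW : 0 ≤ ∑ i, w i := Finset.sum_nonneg fun i _ => hw i
  refine specRad_le_of_eventually_abs_pow_entry_le _ (by positivity) ?_
  filter_upwards [eventually_opNorm_prodRev_le_pow hM hr] with k hk i j
  rw [mul_pow, pow_right_comm]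
  exact abs_sum_smul_kronPow_pow_le Ms hw p k
    (fun f => hk (Ms ∘ f) fun l => Set.mem_range_self (f l)) i j

theorem mul_pow_le_specRad_sum_smul_kronPow {c : ℝ} (hc : 0 ≤ c) (hw : ∀ i, c ≤ w i) {p : ℕ}
    (hp : Even p) (hr0 : 0 ≤ r) (hr : r < jsr (Set.range Ms)) :
    c * r ^ p ≤ specRad (∑ i, w i • kronPow (Ms i) p) := by
  have hn : (0 : ℝ) < n := by exact_mod_cast NeZero.pos n
  set D : ℝ := n * n
  have hD0 : 0 < D := mul_pos hn hn
  refine le_specRad_of_frequently_le_abs_pow_entry _ (c := D⁻¹ ^ p) (by positivity)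
    (by positivity) ?_
  refine (frequently_exists_pow_le_opNorm_prodRev hr0 hr).mono ?_
  rintro k ⟨g, hg, hk⟩
  choose f hf using hg
  obtain rfl : Ms ∘ f = g := funext hf
  obtain ⟨i, j, hij⟩ := exists_opNorm_le_mul_abs_entry (prodRev (Ms ∘ f))
  have hentry : D⁻¹ * r ^ k ≤ |prodRev (Ms ∘ f) i j| :=
    (inv_mul_le_iff₀ hD0).2 (hk.trans hij)
  have hweight : c ^ k ≤ ∏ l, w (f l) := by
    simpa using Finset.prod_le_prod (s := Finset.univ) (fun _ _ => hc) fun l _ => hw (f l)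
  refine ⟨diagIndex i p, diagIndex j p, ?_⟩
  calc D⁻¹ ^ p * (c * r ^ p) ^ k = c ^ k * (D⁻¹ * r ^ k) ^ p := by
        rw [mul_pow, mul_pow, pow_right_comm r p k]; ring
    _ ≤ (∏ l, w (f l)) * |prodRev (Ms ∘ f) i j| ^ p :=
        mul_le_mul hweight (pow_le_pow_left₀ (by positivity) hentry p) (by positivity)
          ((pow_nonneg hc k).trans hweight)
    _ = (∏ l, w (f l)) * prodRev (Ms ∘ f) i j ^ p := by rw [hp.pow_abs]
    _ ≤ ((∑ i, w i • kronPow (Ms i) p) ^ k) (diagIndex i p) (diagIndex j p) :=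
        mul_pow_le_sum_smul_kronPow_pow_diagIndex Ms (fun i => hc.trans (hw i)) hp f i j
    _ ≤ |((∑ i, w i • kronPow (Ms i) p) ^ k) (diagIndex i p) (diagIndex j p)| := le_abs_self _

end MeanKroneckerPower

theorem stmt3_general {ι : Type*} [Fintype ι] [Nonempty ι] {n : ℕ} [NeZero n] (Ms : ι → Mat n)
    {w : ι → ℝ} (hw : ∀ i, 0 < w i) :
    jsr (Set.range Ms) = limsup (fun p : ℕ =>
      specRad (kronExp (∑ i, ENNReal.ofReal (w i) • Measure.dirac (Ms i)) p) ^ ((1 : ℝ) / p))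
      atTop := by
  have hw0 : ∀ i, 0 ≤ w i := fun i => (hw i).le
  have hW : 0 < ∑ i, w i := Finset.sum_pos (fun i _ => hw i) Finset.univ_nonempty
  obtain ⟨i₀, hmin⟩ := Finite.exists_min w
  have heven : ∃ᶠ p : ℕ in atTop, Even p := Nat.frequently_even
  simp only [kronExp_sum_smul_dirac Ms hw0]
  refine (limsup_rpow_one_div_eq (fun p => specRad_nonneg _)
    (jsr_nonneg (bddAbove_opNorm_image_range Ms)) (hw i₀) hW ?_ ?_).symm
  · exact fun r hr => .of_forall fun p => specRad_sum_smul_kronPow_le Ms hw0 p hr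
  · exact fun r hr0 hr => heven.mono fun p hp =>
      mul_pow_le_specRad_sum_smul_kronPow Ms (hw0 i₀) hmin hp hr0 hr

/-- For a finitely supported probability measure `μ = Σ pᵢ δ_{Mᵢ}` (positive
weights summing to 1), `ρ̂({M₁,…,M_N}) = limsup_{p→∞} ρ(E[A^{⊗p}])^{1/p}`. -/
theorem stmt3 (n N : ℕ) (hn : 1 ≤ n) (Ms : Fin N → Mat n) (w : Fin N → ℝ)
    (hw : ∀ i, 0 < w i) (hsum : ∑ i, w i = 1)
    (μ : Measure (Mat n)) (hμ : μ = ∑ i, ENNReal.ofReal (w i) • Measure.dirac (Ms i)) :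
    jsr (Set.range Ms) = limsup (fun p : ℕ => specRad (kronExp μ p) ^ ((1 : ℝ) / p)) atTop := by
  have : NeZero n := ⟨by omega⟩
  have : Nonempty (Fin N) := not_isEmpty_iff.1 fun _ => by simp at hsum
  exact hμ ▸ stmt3_general Ms hw

end
end

section
/- Let n ≥ 1, let K ⊆ ℝⁿ be a proper cone, and let ‖·‖ be a cone linear absolute norm on ℝⁿ with respect to K, with induced matrix norm ‖A‖ := sup_{x ≠ 0} ‖Ax‖/‖x‖. Suppose A₁, …, A_k, B₁, …, B_k ∈ ℝ^{n×n} satisfy, for every i = 1, …, k, that B_i leaves K invariant and A_i − B_i leaves K invariant (i.e. A_i ≥^K B_i ≥^K 0). Then ‖A_k ⋯ A₁‖ ≥ ‖B_k ⋯ B₁‖. -/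
open MeasureTheory Filter Topology
open scoped ENNReal RealInnerProductSpace

noncomputable section

/-!
A cone linear norm is additive on `K`, hence monotone there, so for `v, w ∈ K` the relation
`0 ≤ B ≤ A` gives `‖B (v - w)‖ ≤ ‖B v‖ + ‖B w‖ = ‖B (v + w)‖ ≤ ‖A (v + w)‖ ≤ ‖A‖ ‖v + w‖`.
Minimising over the decompositions `x = v - w` turns the right-hand side into `‖A‖ ‖x‖`, because the
norm is cone absolute; thus `‖B‖ ≤ ‖A‖`. The relation `0 ≤ B ≤ A` passes to products because the
operators leaving `K` invariant form a semiring.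
-/

section PositiveOperators

variable {E : Type*} [AddCommMonoid E] [Module ℝ E] [TopologicalSpace E] [ContinuousAdd E]

/-- The set `π(K)` of continuous linear operators leaving the cone `K` invariant. It is bundled as
a subsemiring so that an order relation between operators passes to their products. -/
def positiveOperators (K : PointedCone ℝ E) : Subsemiring (E →L[ℝ] E) where
  carrier := {T | ∀ x ∈ K, T x ∈ K}
  mul_mem' hS hT x hx := hS _ (hT x hx)
  one_mem' _ hx := hx
  add_mem' hS hT x hx := K.add_mem (hS x hx) (hT x hx)
  zero_mem' _ _ := K.zero_mem

end PositiveOperators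

theorem list_prod_map_sub_list_prod_map_mem {ι R : Type*} [Ring R] (S : Subsemiring R) {l : List ι}
    {a b : ι → R} (hb : ∀ i ∈ l, b i ∈ S) (hab : ∀ i ∈ l, a i - b i ∈ S) :
    (l.map a).prod - (l.map b).prod ∈ S := by
  induction l with
  | nil => simp
  | cons i l ih =>
    obtain ⟨hbi, hbl⟩ := List.forall_mem_cons.1 hb
    obtain ⟨habi, habl⟩ := List.forall_mem_cons.1 hab
    have hai : a i ∈ S := by simpa using S.add_mem habi hbi
    have hprod : (l.map b).prod ∈ S := list_prod_mem (by simpa using hbl)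
    have telescope : a i * (l.map a).prod - b i * (l.map b).prod =
        a i * ((l.map a).prod - (l.map b).prod) + (a i - b i) * (l.map b).prod := by
      noncomm_ring
    simpa only [List.map_cons, List.prod_cons, telescope] using
      S.add_mem (S.mul_mem hai (ih hbl habl)) (S.mul_mem habi hprod)

section ConeNorm

variable {E : Type*} [SeminormedAddCommGroup E] [NormedSpace ℝ E] {K : PointedCone ℝ E}
  {A B : E →L[ℝ] E}

/-- The norm of `E` is cone absolute with respect to `K`. The infimum is expressed by `IsGLB`, which
fails for the empty set, so the cone is required to generate `E`. -/
def HasConeAbsoluteNorm (K : PointedCone ℝ E) : Prop :=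
  ∀ x : E, IsGLB {r : ℝ | ∃ v ∈ K, ∃ w ∈ K, x = v - w ∧ r = ‖v + w‖} ‖x‖

/-- The norm of `E` is cone linear with respect to `K`. This is encoded as additivity on `K`, which
amounts to the norm agreeing on `K` with a linear functional on the span of `K`. -/
def HasConeLinearNorm (K : PointedCone ℝ E) : Prop :=
  ∀ v ∈ K, ∀ w ∈ K, ‖v + w‖ = ‖v‖ + ‖w‖

theorem HasConeLinearNorm.norm_le_norm_of_sub_mem (hlin : HasConeLinearNorm K) {x y : E}
    (hx : x ∈ K) (hxy : y - x ∈ K) : ‖x‖ ≤ ‖y‖ :=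
  calc ‖x‖ ≤ ‖x‖ + ‖y - x‖ := le_add_of_nonneg_right (norm_nonneg _)
    _ = ‖y‖ := by rw [← hlin x hx _ hxy, add_sub_cancel]

theorem HasConeLinearNorm.norm_map_sub_le_norm_map_add (hlin : HasConeLinearNorm K)
    (hB : B ∈ positiveOperators K) (hAB : A - B ∈ positiveOperators K) {v w : E} (hv : v ∈ K)
    (hw : w ∈ K) : ‖B (v - w)‖ ≤ ‖A (v + w)‖ :=
  calc ‖B (v - w)‖ ≤ ‖B v‖ + ‖B w‖ := by rw [map_sub]; exact norm_sub_le _ _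
    _ = ‖B (v + w)‖ := by rw [map_add, hlin _ (hB v hv) _ (hB w hw)]
    _ ≤ ‖A (v + w)‖ :=
      hlin.norm_le_norm_of_sub_mem (hB _ (K.add_mem hv hw)) (hAB _ (K.add_mem hv hw))

theorem opNorm_le_opNorm_of_sub_mem_positiveOperators (habs : HasConeAbsoluteNorm K)
    (hlin : HasConeLinearNorm K) (hB : B ∈ positiveOperators K)
    (hAB : A - B ∈ positiveOperators K) : ‖B‖ ≤ ‖A‖ := by
  refine B.opNorm_le_bound (norm_nonneg A) fun x => ?_
  refine ((habs x).mul_left (norm_nonneg A)).2 ?_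
  rintro _ ⟨_, ⟨v, hv, w, hw, rfl, rfl⟩, rfl⟩
  exact (hlin.norm_map_sub_le_norm_map_add hB hAB hv hw).trans (A.le_opNorm _)

theorem opNorm_eq_sSup_div (T : E →L[ℝ] E) :
    ‖T‖ = sSup {c : ℝ | ∃ x : E, x ≠ 0 ∧ c = ‖T x‖ / ‖x‖} := by
  apply le_antisymm
  · refine T.opNorm_le_bound' (Real.sSup_nonneg ?_) fun x hx => ?_
    · rintro _ ⟨x, -, rfl⟩
      positivity
    · rw [← div_le_iff₀ (by positivity)]
      refine le_csSup ⟨‖T‖, ?_⟩ ⟨x, ne_zero_of_norm_ne_zero hx, rfl⟩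
      rintro _ ⟨y, -, rfl⟩
      exact T.ratio_le_opNorm y
  · refine Real.sSup_le ?_ (norm_nonneg T)
    rintro _ ⟨x, -, rfl⟩
    exact T.ratio_le_opNorm x

end ConeNorm

theorem stmt12_general {E ι : Type*} [SeminormedAddCommGroup E] [NormedSpace ℝ E]
    {K : PointedCone ℝ E} (habs : HasConeAbsoluteNorm K) (hlin : HasConeLinearNorm K) (l : List ι)
    {A B : ι → E →L[ℝ] E} (hB : ∀ i ∈ l, B i ∈ positiveOperators K)
    (hAB : ∀ i ∈ l, A i - B i ∈ positiveOperators K) :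
    ‖(l.map B).prod‖ ≤ ‖(l.map A).prod‖ :=
  opNorm_le_opNorm_of_sub_mem_positiveOperators habs hlin (list_prod_mem (by simpa using hB))
    (list_prod_map_sub_list_prod_map_mem _ hB hAB)

namespace IsProperCone

variable {n : ℕ} {K : Set (EucSp n)}

theorem zero_mem (hK : IsProperCone K) : 0 ∈ K := by
  obtain ⟨x, hx⟩ := hK.solid
  simpa using hK.smul_mem 0 le_rfl x (interior_subset hx)

theorem add_mem (hK : IsProperCone K) {x y : EucSp n} (hx : x ∈ K) (hy : y ∈ K) : x + y ∈ K := by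
  have hmid := hK.convex hx hy one_half_pos.le one_half_pos.le (add_halves 1)
  simpa [smul_smul] using hK.smul_mem 2 zero_le_two _ hmid

end IsProperCone

theorem IsConeAbsolute.isGLB {n : ℕ} {K : Set (EucSp n)} {ν : EucSp n → ℝ}
    (habs : IsConeAbsolute K ν) (hK : IsProperCone K) (hν : IsNormFn ν) (x : EucSp n) :
    IsGLB {r : ℝ | ∃ v ∈ K, ∃ w ∈ K, x = v - w ∧ r = ν (v + w)} (ν x) := by
  have hbdd : BddBelow {r : ℝ | ∃ v ∈ K, ∃ w ∈ K, x = v - w ∧ r = ν (v + w)} := by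
    refine ⟨0, ?_⟩
    rintro _ ⟨v, -, w, -, -, rfl⟩
    exact hν.1 _
  -- Without a decomposition of `x` the infimum would take its junk value `0`, forcing `x = 0`.
  have hne : {r : ℝ | ∃ v ∈ K, ∃ w ∈ K, x = v - w ∧ r = ν (v + w)}.Nonempty := by
    obtain rfl | hx := eq_or_ne x 0
    · exact ⟨_, 0, hK.zero_mem, 0, hK.zero_mem, (sub_zero _).symm, rfl⟩
    · by_contra hempty
      refine hx ((hν.2.1 x).1 ?_)
      rw [habs x, Set.not_nonempty_iff_eq_empty.1 hempty, Real.sInf_empty]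
  rw [habs x]
  exact isGLB_csInf hne hbdd

theorem IsConeLinear.map_add {n : ℕ} {K : Set (EucSp n)} {ν : EucSp n → ℝ}
    (hlin : IsConeLinear K ν) (hK : IsProperCone K) {v w : EucSp n} (hv : v ∈ K) (hw : w ∈ K) :
    ν (v + w) = ν v + ν w := by
  obtain ⟨f, -, hf⟩ := hlin
  rw [hf _ (hK.add_mem hv hw), hf v hv, hf w hw, inner_add_right]

/-- `ℝⁿ` normed by `ν`: a type synonym, so that the norm does not clash with the Euclidean one. -/
def Renormed {n : ℕ} {ν : EucSp n → ℝ} (_ : IsNormFn ν) : Type := EucSp n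

namespace Renormed

variable {n : ℕ} {ν : EucSp n → ℝ} {hν : IsNormFn ν} {K : Set (EucSp n)}

instance : AddCommGroup (Renormed hν) := inferInstanceAs (AddCommGroup (EucSp n))

instance : Module ℝ (Renormed hν) := inferInstanceAs (Module ℝ (EucSp n))

instance : FiniteDimensional ℝ (Renormed hν) := inferInstanceAs (FiniteDimensional ℝ (EucSp n))

instance : Norm (Renormed hν) := ⟨ν⟩

theorem normedSpaceCore : NormedSpace.Core ℝ (Renormed hν) where
  norm_nonneg := hν.1
  norm_eq_zero_iff := hν.2.1
  norm_smul := hν.2.2.1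
  norm_triangle := hν.2.2.2

instance : NormedAddCommGroup (Renormed hν) := .ofCore normedSpaceCore

instance : NormedSpace ℝ (Renormed hν) := .ofCore normedSpaceCore

/-- A matrix as a continuous linear operator on `ℝⁿ` normed by `ν`. -/
def ofMatrix (hν : IsNormFn ν) : Mat n ≃ₐ[ℝ] (Renormed hν →L[ℝ] Renormed hν) :=
  AlgEquiv.trans (A₂ := Module.End ℝ (Renormed hν)) (Matrix.toLpLinAlgEquiv 2)
    (Module.End.toContinuousLinearMap (Renormed hν))

/-- A proper cone as a cone in `ℝⁿ` normed by `ν`. -/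
def cone (hν : IsNormFn ν) (hK : IsProperCone K) : PointedCone ℝ (Renormed hν) where
  carrier := K
  add_mem' := hK.add_mem
  zero_mem' := hK.zero_mem
  smul_mem' c x hx := hK.smul_mem c c.2 x hx

theorem hasConeAbsoluteNorm_cone (hK : IsProperCone K) (habs : IsConeAbsolute K ν) :
    HasConeAbsoluteNorm (cone hν hK) :=
  habs.isGLB hK hν

theorem hasConeLinearNorm_cone (hK : IsProperCone K) (hlin : IsConeLinear K ν) :
    HasConeLinearNorm (cone hν hK) := fun _ hv _ hw =>
  hlin.map_add hK hv hw

theorem norm_ofMatrix (A : Mat n) : ‖ofMatrix hν A‖ = inducedNormFn ν A :=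
  opNorm_eq_sSup_div (ofMatrix hν A)

theorem norm_prod_ofMatrix {k : ℕ} (A : Fin k → Mat n) :
    ‖((List.finRange k).reverse.map fun i => ofMatrix hν (A i)).prod‖ =
      inducedNormFn ν (prodRev A) := by
  rw [← norm_ofMatrix (hν := hν), prodRev, List.ofFn_eq_map, ← List.map_reverse, map_list_prod,
    List.map_map]
  rfl

theorem ofMatrix_mem_positiveOperators (hK : IsProperCone K) {A : Mat n}
    (hA : LeavesInv A K) : ofMatrix hν A ∈ positiveOperators (cone hν hK) :=
  hA

theorem ofMatrix_sub_ofMatrix_mem_positiveOperators (hK : IsProperCone K) {A B : Mat n}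
    (hAB : LeavesInv (A - B) K) :
    ofMatrix hν A - ofMatrix hν B ∈ positiveOperators (cone hν hK) := by
  rw [← map_sub]
  exact ofMatrix_mem_positiveOperators hK hAB

end Renormed

/-- If `ν` is a cone linear absolute norm w.r.t. a proper cone `K` and
`A_i ≥^K B_i ≥^K 0` for `i = 1, …, k`, then `‖A_k ⋯ A₁‖ ≥ ‖B_k ⋯ B₁‖` in the induced
matrix norm. -/
theorem stmt12 (n : ℕ) (hn : 1 ≤ n) (K : Set (EucSp n)) (hK : IsProperCone K)
    (ν : EucSp n → ℝ) (hν : IsNormFn ν) (habs : IsConeAbsolute K ν) (hlin : IsConeLinear K ν)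
    (k : ℕ) (A B : Fin k → Mat n)
    (hB : ∀ i, LeavesInv (B i) K) (hAB : ∀ i, LeavesInv (A i - B i) K) :
    inducedNormFn ν (prodRev B) ≤ inducedNormFn ν (prodRev A) := by
  simpa only [Renormed.norm_prod_ofMatrix] using
    stmt12_general (Renormed.hasConeAbsoluteNorm_cone (hν := hν) hK habs)
      (Renormed.hasConeLinearNorm_cone hK hlin) (List.finRange k).reverse
      (fun i _ => Renormed.ofMatrix_mem_positiveOperators hK (hB i))
      (fun i _ => Renormed.ofMatrix_sub_ofMatrix_mem_positiveOperators hK (hAB i))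

end
end
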